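/- arXiv:1202.0932 — 4 statements merged into one kernel-verified Lean document; each statement's English description precedes it below -/
import Mathlib

section
/- For every n ≥ 1 and all permutations π, σ ∈ S_n, the minimum number R(π,σ) of right translocations needed to transform π into σ equals the cardinality of the set J(π,σ) = { i ∈ [n] : there exists j ∈ [n] with π⁻¹(i) < π⁻¹(j) and σ⁻¹(i) > σ⁻¹(j) }. -/
/-- `IsMove l l'` holds if `l'` is obtained from `l` by a single translocation:
removing the element at position `i` and reinserting it at position `j`. -/
def IsMove {α : Type*} (l l' : List α) : Prop :=
  ∃ i j : Fin l.length, l' = (l.eraseIdx i).insertIdx j (l.get i)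

/-- `ReachIn step m l l'` holds if `l'` can be obtained from `l` by `m` applications
of the relation `step`. -/
def ReachIn {α : Type*} (step : List α → List α → Prop) : ℕ → List α → List α → Prop
  | 0, l, l' => l = l'
  | m+1, l, l' => ∃ l'', step l l'' ∧ ReachIn step m l'' l'

/-- The one-line notation of a permutation of `Fin n`. -/
def oneLine {n : ℕ} (σ : Equiv.Perm (Fin n)) : List (Fin n) := List.ofFn σ

/-- The translocation distance: the minimum number of translocations transforming
the one-line notation of `σ` into that of `π`. -/
noncomputable def translocDist {n : ℕ} (σ π : Equiv.Perm (Fin n)) : ℕ :=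
  sInf {m | ReachIn IsMove m (oneLine σ) (oneLine π)}

/-- `IsRightMove l l'` holds if `l'` is obtained from `l` by a single right
translocation: removing the element at position `i` and reinserting it at a
position `j ≥ i`. -/
def IsRightMove {α : Type*} (l l' : List α) : Prop :=
  ∃ i j : Fin l.length, (i : ℕ) ≤ (j : ℕ) ∧ l' = (l.eraseIdx i).insertIdx j (l.get i)

/-- `rightTranslocCount π σ` is the minimum number of right translocations
transforming `π` into `σ`. -/
noncomputable def rightTranslocCount {n : ℕ} (π σ : Equiv.Perm (Fin n)) : ℕ :=
  sInf {m | ReachIn IsRightMove m (oneLine π) (oneLine σ)}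

open Classical in
/-- number of entries that are followed by an entry with smaller key -/
noncomputable def invCnt {α β : Type*} [LinearOrder β] (k : α → β) : List α → ℕ
  | [] => 0
  | x :: D => invCnt k D + if ∃ b ∈ D, k b < k x then 1 else 0

theorem invCnt_sublist {α β : Type*} [LinearOrder β] (k : α → β) {l l' : List α}
    (h : l.Sublist l') : invCnt k l ≤ invCnt k l' := by
  induction h with
  | slnil => simp
  | cons a h ih => simp only [invCnt]; omega
  | cons_cons a h ih =>
    simp only [invCnt]
    split_ifs with h1 h2 h2
    · omega
    · obtain ⟨b, hb, hk⟩ := h1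
      exact absurd ⟨b, h.subset hb, hk⟩ h2
    · omega
    · omega

theorem invCnt_rightMove {α β : Type*} [LinearOrder β] (k : α → β) (l : List α) :
    ∀ i j : ℕ, (hi : i < l.length) → (hj : j < l.length) → i ≤ j →
      invCnt k l ≤ invCnt k ((l.eraseIdx i).insertIdx j l[i]) + 1 := by
  induction l with
  | nil => intro i j hi; simp at hi
  | cons x D ih =>
    intro i j hi hj hij
    cases i with
    | zero =>
      simp only [List.eraseIdx_cons_zero, List.getElem_cons_zero]
      have h1 := invCnt_sublist k (List.sublist_insertIdx D j x)
      simp only [invCnt]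
      split_ifs <;> omega
    | succ i =>
      obtain ⟨j, rfl⟩ : ∃ j', j = j' + 1 := ⟨j - 1, by omega⟩
      simp only [List.length_cons, Nat.add_lt_add_iff_right] at hi hj
      simp only [List.eraseIdx_cons_succ, List.getElem_cons_succ, List.insertIdx_succ_cons, invCnt]
      have h1 := ih i j hi hj (by omega)
      have hp : ((D.eraseIdx i).insertIdx j D[i]).Perm D := by
        refine (List.perm_insertIdx _ _ ?_).trans (List.getElem_cons_eraseIdx_perm hi)
        rw [List.length_eraseIdx_of_lt hi]; omega
      simp only [hp.mem_iff]
      omega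

theorem invCnt_eq_zero {α β : Type*} [LinearOrder β] (k : α → β) {l : List α}
    (h : l.Pairwise (fun a b => k a ≤ k b)) : invCnt k l = 0 := by
  induction h with
  | nil => rfl
  | cons h _ ih =>
    simp only [invCnt, ih]
    rw [if_neg]
    rintro ⟨b, hb, hk⟩
    exact absurd (h b hb) (not_le.2 hk)

theorem invCnt_le {α β : Type*} [LinearOrder β] (k : α → β) {t : List α}
    (h : t.Pairwise (fun a b => k a ≤ k b)) (m : ℕ) :
    ∀ l, ReachIn IsRightMove m l t → invCnt k l ≤ m := by
  induction m with
  | zero => rintro l rfl; rw [invCnt_eq_zero k h]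
  | succ m ih =>
    rintro l ⟨l'', ⟨i, j, hij, rfl⟩, hr⟩
    have h1 := ih _ hr
    have h2 := invCnt_rightMove k l i j i.2 j.2 hij
    simp only [List.get_eq_getElem] at h1
    omega

theorem IsRightMove.cons' {α : Type*} (x : α) {l l' : List α} (h : IsRightMove l l') :
    IsRightMove (x :: l) (x :: l') := by
  obtain ⟨i, j, hij, rfl⟩ := h
  refine ⟨i.succ, j.succ, by simpa using hij, ?_⟩
  simp

theorem ReachIn.cons' {α : Type*} (x : α) (m : ℕ) : ∀ {l l' : List α},
    ReachIn IsRightMove m l l' → ReachIn IsRightMove m (x :: l) (x :: l') := by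
  induction m with
  | zero => rintro l l' rfl; rfl
  | succ m ih => rintro l l' ⟨l'', h, hr⟩; exact ⟨_, h.cons' x, ih hr⟩

theorem ReachIn.trans_one {α : Type*} (s : List α → List α → Prop) (m : ℕ) :
    ∀ {l l' l'' : List α}, ReachIn s m l l' → s l' l'' → ReachIn s (m + 1) l l'' := by
  induction m with
  | zero => rintro l l' l'' rfl h; exact ⟨_, h, rfl⟩
  | succ m ih => rintro l l' l'' ⟨p, h, hr⟩ h2; exact ⟨_, h, ih hr h2⟩

theorem isRightMove_append {α : Type*} (x : α) (B C : List α) :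
    IsRightMove (x :: (B ++ C)) (B ++ x :: C) := by
  refine ⟨⟨0, by simp⟩, ⟨B.length, by simp⟩, by simp, ?_⟩
  simp only [List.eraseIdx_cons_zero, List.get_eq_getElem, List.getElem_cons_zero]
  induction B with
  | nil => simp
  | cons b B ih => simpa using ih

theorem reach_sort {α β : Type*} [LinearOrder β] (k : α → β) (l : List α) :
    ∃ l', l'.Perm l ∧ l'.Pairwise (fun a b => k a ≤ k b) ∧
      ReachIn IsRightMove (invCnt k l) l l' := by
  classical
  induction l with
  | nil => exact ⟨[], List.Perm.refl _, List.Pairwise.nil, rfl⟩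
  | cons x D ih =>
    obtain ⟨D', hp, hs, hr⟩ := ih
    by_cases h : ∃ b ∈ D, k b < k x
    · refine ⟨D'.takeWhile (fun b => k b < k x) ++ x :: D'.dropWhile (fun b => k b < k x), ?_, ?_, ?_⟩
      · refine List.perm_middle.trans ?_
        rw [List.takeWhile_append_dropWhile]
        exact hp.cons x
      · have key : ∀ D' : List α, D'.Pairwise (fun a b => k a ≤ k b) →
            (D'.takeWhile (fun b => k b < k x) ++ x :: D'.dropWhile (fun b => k b < k x)).Pairwise
              (fun a b => k a ≤ k b) := by
          intro E hE
          induction hE with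
          | nil => simp
          | @cons a E h1 h2 ih2 =>
            by_cases hax : k a < k x
            · simp only [hax, decide_true, List.takeWhile_cons_of_pos, List.dropWhile_cons_of_pos,
                List.cons_append, List.pairwise_cons]
              refine ⟨?_, ih2⟩
              intro b hb
              rw [List.perm_middle.mem_iff, List.takeWhile_append_dropWhile, List.mem_cons] at hb
              rcases hb with rfl | hb
              · exact hax.le
              · exact h1 b hb
            · have hxa := not_lt.1 hax
              simp only [hax, decide_false, List.takeWhile_cons, List.dropWhile_cons]
              simp only [Bool.false_eq_true, if_false, List.nil_append, List.pairwise_cons]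
              refine ⟨?_, h1, h2⟩
              intro b hb
              rcases List.mem_cons.1 hb with rfl | hb
              · exact hxa
              · exact hxa.trans (h1 b hb)
        exact key D' hs
      · simp only [invCnt, if_pos h]
        refine ReachIn.trans_one _ _ (ReachIn.cons' x _ hr) ?_
        have := isRightMove_append x (D'.takeWhile (fun b => k b < k x))
          (D'.dropWhile (fun b => k b < k x))
        rwa [List.takeWhile_append_dropWhile] at this
    · refine ⟨x :: D', hp.cons x, ?_, ?_⟩
      · push Not at h
        exact List.Pairwise.cons (fun b hb => h b (hp.mem_iff.1 hb)) hs
      · simp only [invCnt, if_neg h]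
        exact ReachIn.cons' x _ hr

open Classical in
theorem invCnt_ofFn {α β : Type*} [LinearOrder β] (k : α → β) : ∀ (n : ℕ) (f : Fin n → α),
    invCnt k (List.ofFn f) =
      (Finset.univ.filter (fun i : Fin n => ∃ j, i < j ∧ k (f j) < k (f i))).card := by
  intro n
  induction n with
  | zero => intro f; simp [invCnt]
  | succ n ih =>
    intro f
    rw [List.ofFn_succ, invCnt, ih, Fin.card_filter_univ_succ]
    simp [Fin.exists_fin_succ, List.mem_ofFn]
    split_ifs <;> omega

/-- For every `n ≥ 1` and all `π, σ ∈ S_n`, the minimum number `R(π,σ)` of right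
translocations needed to transform `π` into `σ` equals the cardinality of the set
`J(π,σ) = { i : ∃ j, π⁻¹(i) < π⁻¹(j) and σ⁻¹(i) > σ⁻¹(j) }`. -/
theorem rightTranslocCount_eq_card_J (n : ℕ) (hn : 1 ≤ n) (π σ : Equiv.Perm (Fin n)) :
    rightTranslocCount π σ =
      {i : Fin n | ∃ j : Fin n, π⁻¹ i < π⁻¹ j ∧ σ⁻¹ j < σ⁻¹ i}.ncard := by
  classical
  have hst : (oneLine σ).Pairwise (fun a b => (σ⁻¹ : Equiv.Perm (Fin n)) a ≤ σ⁻¹ b) := by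
    unfold oneLine
    rw [List.pairwise_ofFn]
    intro i j hij
    simpa using hij.le
  obtain ⟨l', hp, hs, hr⟩ := reach_sort (σ⁻¹ : Equiv.Perm (Fin n)) (oneLine π)
  have hperm : l'.Perm (oneLine σ) := by
    refine hp.trans ?_
    unfold oneLine
    rw [List.perm_ext_iff_of_nodup (List.nodup_ofFn.2 π.injective) (List.nodup_ofFn.2 σ.injective)]
    intro a
    simp [List.mem_ofFn, π.surjective a, σ.surjective a]
  have heq : l' = oneLine σ := by
    refine hperm.eq_of_pairwise ?_ hs hst
    intro a b _ _ h1 h2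
    exact (σ⁻¹ : Equiv.Perm (Fin n)).injective (le_antisymm h1 h2)
  rw [heq] at hr
  have h1 : rightTranslocCount π σ = invCnt (σ⁻¹ : Equiv.Perm (Fin n)) (oneLine π) := by
    apply le_antisymm
    · exact Nat.sInf_le hr
    · have hne : {m | ReachIn IsRightMove m (oneLine π) (oneLine σ)}.Nonempty := ⟨_, hr⟩
      have hm := Nat.sInf_mem hne
      exact invCnt_le _ hst _ _ hm
  rw [h1, oneLine, invCnt_ofFn, ← Set.ncard_coe_finset, ← Set.ncard_image_of_injective _ π.injective]
  congr 1
  ext a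
  simp only [Finset.coe_filter, Finset.mem_univ, true_and, Set.mem_image, Set.mem_ofPred_eq]
  constructor
  · rintro ⟨i, ⟨j, hij, hk⟩, rfl⟩
    exact ⟨π j, by simpa using hij, hk⟩
  · rintro ⟨j, hij, hk⟩
    exact ⟨π⁻¹ a, ⟨π⁻¹ j, hij, by simpa using hk⟩, by simp⟩
end

section
/- For every n ≥ 2: (i) for all permutations π, σ ∈ S_n, R(π,σ) − d∘(π,σ) ≤ n − 2, where R(π,σ) is the minimum number of right translocations transforming π into σ and d∘ is the translocation distance; and (ii) there exist π, σ ∈ S_n with R(π,σ) − d∘(π,σ) = n − 2 (for instance π = (2,3,…,n,1) and σ = e, for which R(π,σ) = n − 1 and d∘(π,σ) = 1). -/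
theorem insertIdx_eq_take_drop_aux {α : Type*} (l : List α) (j : ℕ) (x : α) (h : j ≤ l.length) :
    l.insertIdx j x = l.take j ++ x :: l.drop j := by
  induction l generalizing j with
  | nil => simp at h; subst h; simp
  | cons a t ih =>
    cases j with
    | zero => simp
    | succ j => simp at h; simp [ih j h]

theorem isRightMove_iff {α : Type*} (l l' : List α) :
    IsRightMove l l' ↔ ∃ (a : List α) (x : α) (b c : List α),
      l = a ++ x :: (b ++ c) ∧ l' = a ++ (b ++ x :: c) := by
  constructor
  · rintro ⟨⟨i, hi⟩, ⟨j, hj⟩, hij, rfl⟩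
    simp only at hij
    refine ⟨l.take i, l[i], (l.drop (i+1)).take (j - i), (l.drop (i+1)).drop (j - i), ?_, ?_⟩
    · simp
    · simp only [List.get_eq_getElem]
      rw [insertIdx_eq_take_drop_aux _ _ _ (by rw [List.length_eraseIdx, if_pos hi]; omega), List.eraseIdx_eq_take_drop_succ]
      rw [List.take_append, List.drop_append]
      have h1 : (l.take i).length = i := by simp; omega
      rw [h1, List.take_of_length_le (by omega), List.drop_eq_nil_of_le (by omega : (l.take i).length ≤ j)]
      simp
  · rintro ⟨a, x, b, c, rfl, rfl⟩
    refine ⟨⟨a.length, by simp⟩, ⟨a.length + b.length, by simp⟩, by simp, ?_⟩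
    simp only [List.get_eq_getElem]
    rw [insertIdx_eq_take_drop_aux _ _ _ (by simp [List.length_eraseIdx]), List.eraseIdx_eq_take_drop_succ]
    have h1 : a.take (a.length + b.length) = a := List.take_of_length_le (by omega)
    have h2 : a.drop (a.length + b.length) = [] := List.drop_eq_nil_of_le (by omega)
    have h3 : a.drop (a.length + 1) = [] := List.drop_eq_nil_of_le (by omega)
    have h4 : a.drop (a.length + 1 + b.length) = [] := List.drop_eq_nil_of_le (by omega)
    simp [List.take_append, List.drop_append, h1, h2, h3, h4]

theorem IsRightMove.append {α : Type*} {l l' : List α} (h : IsRightMove l l') (s : List α) :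
    IsRightMove (l ++ s) (l' ++ s) := by
  rw [isRightMove_iff] at *
  obtain ⟨a, x, b, c, rfl, rfl⟩ := h
  exact ⟨a, x, b, c ++ s, by simp, by simp⟩

theorem ReachIn.append_right {α : Type*} {m : ℕ} {l l' : List α}
    (h : ReachIn IsRightMove m l l') (s : List α) :
    ReachIn IsRightMove m (l ++ s) (l' ++ s) := by
  induction m generalizing l with
  | zero => simp only [ReachIn] at *; rw [h]
  | succ m ih =>
    obtain ⟨l'', h1, h2⟩ := h
    exact ⟨_, h1.append s, ih h2⟩

theorem ReachIn.mono {α : Type*} {r s : List α → List α → Prop} (hrs : ∀ a b, r a b → s a b)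
    {m : ℕ} {l l' : List α} (h : ReachIn r m l l') : ReachIn s m l l' := by
  induction m generalizing l with
  | zero => exact h
  | succ m ih =>
    obtain ⟨l'', h1, h2⟩ := h
    exact ⟨_, hrs _ _ h1, ih h2⟩

theorem reach_of_perm {α : Type*} (m : ℕ) (l l' : List α) (h : l.Perm l')
    (hl : l'.length = m + 1) : ReachIn IsRightMove m l l' := by
  induction m generalizing l l' with
  | zero =>
    obtain ⟨x, rfl⟩ := List.length_eq_one_iff.1 hl
    exact List.perm_singleton.1 h
  | succ m ih =>
    rcases List.eq_nil_or_concat l' with rfl | ⟨t, x, rfl⟩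
    · simp at hl
    · have hx : x ∈ l := h.mem_iff.2 (by simp)
      obtain ⟨a, b, rfl⟩ := List.append_of_mem hx
      refine ⟨(a ++ b) ++ [x], ?_, ?_⟩
      · rw [isRightMove_iff]
        exact ⟨a, x, b, [], by simp, by simp⟩
      · simp only [List.concat_eq_append] at *
        apply ReachIn.append_right
        apply ih
        · have h1 : (x :: (a ++ b)).Perm (x :: t) :=
            List.perm_middle.symm.trans (h.trans (List.perm_append_singleton x t))
          exact h1.cons_inv
        · simpa using hl

theorem idxOf_rightMove {α : Type*} [DecidableEq α] (z : α) {l l' : List α}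
    (h : IsRightMove l l') : l.idxOf z ≤ l'.idxOf z + 1 := by
  rw [isRightMove_iff] at h
  obtain ⟨a, x, b, c, rfl, rfl⟩ := h
  simp only [List.idxOf_append, List.idxOf_cons]
  by_cases ha : z ∈ a
  · simp [ha]
  · by_cases hx : x = z
    · subst hx; simp [ha]; omega
    · have hx' : (x == z) = false := by simpa using hx
      by_cases hb : z ∈ b <;> simp [ha, hb, hx'] <;> omega

theorem idxOf_reach {α : Type*} [DecidableEq α] (z : α) {m : ℕ} {l l' : List α}
    (h : ReachIn IsRightMove m l l') : l.idxOf z ≤ l'.idxOf z + m := by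
  induction m generalizing l with
  | zero => simp only [ReachIn] at h; simp [h]
  | succ m ih =>
    obtain ⟨l'', h1, h2⟩ := h
    have := idxOf_rightMove z h1
    have := ih h2
    omega

theorem oneLine_perm {n : ℕ} (π σ : Equiv.Perm (Fin n)) : (oneLine π).Perm (oneLine σ) := by
  unfold oneLine
  exact (Equiv.Perm.ofFn_comp_perm π (fun i => i)).trans
    (Equiv.Perm.ofFn_comp_perm σ (fun i => i)).symm

theorem right_mem {n : ℕ} (hn : 1 ≤ n) (π σ : Equiv.Perm (Fin n)) :
    ReachIn IsRightMove (n - 1) (oneLine π) (oneLine σ) :=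
  reach_of_perm _ _ _ (oneLine_perm π σ) (by simp [oneLine]; omega)

theorem right_le {n : ℕ} (hn : 1 ≤ n) (π σ : Equiv.Perm (Fin n)) :
    rightTranslocCount π σ ≤ n - 1 := Nat.sInf_le (right_mem hn π σ)

theorem translocDist_pos {n : ℕ} (hn : 1 ≤ n) (π σ : Equiv.Perm (Fin n)) (h : π ≠ σ) :
    1 ≤ translocDist π σ := by
  have hmem := right_mem hn π σ
  have hne : {m | ReachIn IsMove m (oneLine π) (oneLine σ)}.Nonempty :=
    ⟨n - 1, hmem.mono (fun a b ⟨i, j, _, h⟩ => ⟨i, j, h⟩)⟩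
  by_contra hc
  have h0 : translocDist π σ = 0 := by omega
  have h1 := Nat.sInf_mem hne
  change ReachIn IsMove (translocDist π σ) _ _ at h1
  rw [h0] at h1
  apply h
  exact Equiv.coe_fn_injective (List.ofFn_injective h1)

/-- For every `n ≥ 2`: (i) for all `π, σ ∈ S_n`, the gap `R(π,σ) − d∘(π,σ)` between the
right translocation count and the translocation distance is at most `n − 2`; and
(ii) there exist `π, σ ∈ S_n` attaining this gap, namely with `R(π,σ) = n − 1` and
`d∘(π,σ) = 1`, so that `R(π,σ) − d∘(π,σ) = n − 2`. -/
theorem rightTransloc_gap (n : ℕ) (hn : 2 ≤ n) :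
    (∀ π σ : Equiv.Perm (Fin n), rightTranslocCount π σ - translocDist π σ ≤ n - 2) ∧
    (∃ π σ : Equiv.Perm (Fin n), rightTranslocCount π σ = n - 1 ∧ translocDist π σ = 1 ∧
      rightTranslocCount π σ - translocDist π σ = n - 2) := by
  constructor
  · intro π σ
    by_cases h : π = σ
    · subst h
      have : rightTranslocCount π π ≤ 0 := Nat.sInf_le (by simp [ReachIn])
      omega
    · have := right_le (by omega) π σ
      have := translocDist_pos (by omega) π σ h
      omega
  · obtain ⟨k, rfl⟩ : ∃ k, n = k + 2 := ⟨n - 2, by omega⟩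
    have hpi : oneLine (finRotate (k+2)) = (List.ofFn (fun i : Fin (k+1) => i.succ)) ++ [0] := by
      unfold oneLine
      rw [List.ofFn_succ_last]
      simp
    have hid : oneLine (1 : Equiv.Perm (Fin (k+2))) = 0 :: (List.ofFn (fun i : Fin (k+1) => i.succ)) := by
      unfold oneLine
      rw [List.ofFn_succ]
      simp
    have hR : rightTranslocCount (finRotate (k+2)) 1 = k + 1 := by
      apply le_antisymm (right_le (by omega) _ _)
      have h1 : ReachIn IsRightMove (rightTranslocCount (finRotate (k+2)) 1) _ _ :=
        Nat.sInf_mem (⟨k + 2 - 1, right_mem (by omega) (finRotate (k+2)) 1⟩ :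
          {m | ReachIn IsRightMove m (oneLine (finRotate (k+2))) (oneLine 1)}.Nonempty)
      have h2 := idxOf_reach 0 h1
      rw [hpi, hid, List.idxOf_append_of_notMem (by simp [List.mem_ofFn])] at h2
      simpa using h2
    have hD : translocDist (finRotate (k+2)) 1 = 1 := by
      apply le_antisymm
      · apply Nat.sInf_le
        refine ⟨_, ?_, rfl⟩
        rw [hpi, hid]
        refine ⟨⟨k+1, by simp⟩, ⟨0, by simp⟩, ?_⟩
        simp [List.eraseIdx_append_of_length_le]
      · apply translocDist_pos (by omega)
        intro h
        have := congrArg (fun f : Equiv.Perm (Fin (k+2)) => f 0) h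
        simp at this
    exact ⟨finRotate (k+2), 1, by rw [hR]; rfl, hD, by rw [hR, hD]; omega⟩
end

section
/- For every n ≥ 1 and every integer r with 0 ≤ r ≤ n, the number of permutations σ ∈ S_n with d∘(σ,e) ≤ r is at most C(n,r) · n!/(n−r)!, where C(n,r) is the binomial coefficient. -/
theorem reachIn_trans {α : Type*} {step : List α → List α → Prop} {a b : ℕ} {l₁ l₂ l₃ : List α}
    (h : ReachIn step a l₁ l₂) (h' : ReachIn step b l₂ l₃) : ReachIn step (a + b) l₁ l₃ := by
  induction a generalizing l₁ with
  | zero =>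
    have h0 : l₁ = l₂ := h
    subst h0
    simpa using h'
  | succ a ih =>
    obtain ⟨l, hl, hr⟩ := h
    rw [Nat.succ_add]
    exact ⟨l, hl, ih hr⟩

theorem isMove_cons {α : Type*} (x : α) {l l' : List α} (h : IsMove l l') :
    IsMove (x :: l) (x :: l') := by
  obtain ⟨i, j, rfl⟩ := h
  exact ⟨i.succ, j.succ, by simp⟩

theorem reachIn_cons {α : Type*} (x : α) {m : ℕ} {l l' : List α} (h : ReachIn IsMove m l l') :
    ReachIn IsMove m (x :: l) (x :: l') := by
  induction m generalizing l with
  | zero =>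
    have h0 : l = l' := h
    subst h0
    rfl
  | succ a ih =>
    obtain ⟨k, hl, hr⟩ := h
    exact ⟨_, isMove_cons x hl, ih hr⟩

theorem reachIn_of_perm {α : Type*} {l l' : List α} (h : l.Perm l') :
    ∃ m, ReachIn IsMove m l l' := by
  induction h with
  | nil => exact ⟨0, rfl⟩
  | cons x _ ih =>
    obtain ⟨m, hm⟩ := ih
    exact ⟨m, reachIn_cons x hm⟩
  | swap x y l =>
    exact ⟨1, _, ⟨⟨0, by simp⟩, ⟨1, by simp⟩, by simp⟩, rfl⟩
  | trans _ _ ih₁ ih₂ =>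
    obtain ⟨a, ha⟩ := ih₁
    obtain ⟨b, hb⟩ := ih₂
    exact ⟨_, reachIn_trans ha hb⟩

theorem sublist_eraseIdx_aux {α : Type*} {s l : List α} (h : s.Sublist l) (j : ℕ) :
    ∃ s' : List α, s'.Sublist s ∧ s'.Sublist (l.eraseIdx j) ∧ s.length ≤ s'.length + 1 := by
  induction h generalizing j with
  | slnil => exact ⟨[], by simp⟩
  | @cons s l a h ih =>
    cases j with
    | zero => exact ⟨s, List.Sublist.refl _, by simpa using h, by simp⟩
    | succ j =>
      obtain ⟨s', h1, h2, h3⟩ := ih j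
      exact ⟨s', h1, by simpa using h2.cons a, h3⟩
  | @cons_cons s l a h ih =>
    cases j with
    | zero => exact ⟨s, by simp, by simpa using h, by simp⟩
    | succ j =>
      obtain ⟨s', h1, h2, h3⟩ := ih j
      exact ⟨a :: s', h1.cons_cons a, by simpa using h2.cons_cons a, by simpa using h3⟩

theorem common_sublist_of_reachIn {α : Type*} {m : ℕ} {l l' : List α}
    (h : ReachIn IsMove m l l') :
    ∃ s : List α, s.Sublist l ∧ s.Sublist l' ∧ l'.length ≤ s.length + m := by
  induction m generalizing l with
  | zero =>
    have h0 : l = l' := h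
    subst h0
    exact ⟨l, by simp⟩
  | succ a ih =>
    obtain ⟨k, ⟨i, j, rfl⟩, hr⟩ := h
    obtain ⟨s, h1, h2, h3⟩ := ih hr
    obtain ⟨s', g1, g2, g3⟩ := sublist_eraseIdx_aux h1 j
    rw [List.eraseIdx_insertIdx_self] at g2
    exact ⟨s', g2.trans (List.eraseIdx_sublist _ _), g1.trans h2, by omega⟩

theorem exists_set_of_dist {n r : ℕ} (hr : r ≤ n) (σ : Equiv.Perm (Fin n))
    (h : translocDist σ 1 ≤ r) :
    ∃ A : Finset (Fin n), A.card = r ∧ StrictMonoOn σ ((A : Set (Fin n))ᶜ) := by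
  have hne : {m | ReachIn IsMove m (oneLine σ) (oneLine (1 : Equiv.Perm (Fin n)))}.Nonempty := by
    apply reachIn_of_perm
    unfold oneLine
    rw [List.perm_ext_iff_of_nodup (List.nodup_ofFn.2 σ.injective)
      (List.nodup_ofFn.2 (Equiv.injective _))]
    intro a
    simp only [List.mem_ofFn]
    exact ⟨fun _ => ⟨a, rfl⟩, fun _ => ⟨σ.symm a, by simp⟩⟩
  have hm := Nat.sInf_mem hne
  obtain ⟨s, h1, h2, h3⟩ := common_sublist_of_reachIn hm
  change _ ≤ s.length + translocDist σ 1 at h3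
  have h3' : n ≤ s.length + translocDist σ 1 := by simpa [oneLine] using h3
  have hs : s.Pairwise (· < ·) := by
    refine List.Pairwise.sublist h2 ?_
    unfold oneLine
    rw [List.pairwise_ofFn]
    intro i j hij
    exact hij
  obtain ⟨f, hf⟩ := List.sublist_iff_exists_fin_orderEmbedding_get_eq.1 h1
  have hlen : (oneLine σ).length = n := by simp [oneLine]
  have hget : ∀ k : Fin s.length, s.get k = σ (Fin.cast hlen (f k)) := by
    intro k
    rw [hf k]
    simp [oneLine]
    rfl
  have hcard : n - r ≤ (Finset.univ.image (fun k => Fin.cast hlen (f k))).card := by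
    rw [Finset.card_image_of_injective]
    · simp; omega
    · intro a b hab
      exact f.injective (Fin.cast_injective hlen hab)
  obtain ⟨B, hB, hBc⟩ := Finset.exists_subset_card_eq hcard
  refine ⟨Bᶜ, ?_, ?_⟩
  · rw [Finset.card_compl, hBc, Fintype.card_fin]; omega
  · intro x hx y hy hxy
    have hx' : x ∈ B := by simpa using hx
    have hy' : y ∈ B := by simpa using hy
    obtain ⟨a, -, rfl⟩ := Finset.mem_image.1 (hB hx')
    obtain ⟨b, -, rfl⟩ := Finset.mem_image.1 (hB hy')
    rw [← hget, ← hget]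
    have hab : a < b := f.lt_iff_lt.1 hxy
    exact List.pairwise_iff_get.1 hs a b hab

theorem card_strictMonoOn_le {n : ℕ} (A : Finset (Fin n)) :
    {σ : Equiv.Perm (Fin n) | StrictMonoOn σ ((A : Set (Fin n))ᶜ)}.ncard ≤
      n.descFactorial A.card := by
  have hE : (Set.univ : Set (A ↪ Fin n)).ncard = n.descFactorial A.card := by
    rw [Set.ncard_univ, Nat.card_eq_fintype_card, Fintype.card_embedding_eq]
    simp
  rw [← hE]
  refine Set.ncard_le_ncard_of_injOn
    (fun σ : Equiv.Perm (Fin n) => (⟨fun a => σ a, fun a b hab => Subtype.ext (σ.injective hab)⟩ : A ↪ Fin n))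
    (fun _ _ => Set.mem_univ _) ?_ (Set.toFinite _)
  intro σ hσ τ hτ hst
  have hA : ∀ a ∈ A, σ a = τ a := fun a ha => by
    have := DFunLike.congr_fun hst (⟨a, ha⟩ : A)
    exact this
  have himg : σ '' ((A : Set (Fin n))ᶜ) = τ '' ((A : Set (Fin n))ᶜ) := by
    rw [Set.image_compl_eq σ.bijective, Set.image_compl_eq τ.bijective,
      Set.image_congr (fun a ha => hA a ha)]
  have hres : (((A : Set (Fin n))ᶜ).domRestrict σ) = (((A : Set (Fin n))ᶜ).domRestrict τ) := by
    refine (StrictMono.range_inj ?_ ?_).1 ?_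
    · exact fun a b hab => hσ a.2 b.2 hab
    · exact fun a b hab => hτ a.2 b.2 hab
    · rw [Set.range_domRestrict, Set.range_domRestrict, himg]
  ext1 x
  by_cases hx : x ∈ A
  · exact hA x hx
  · exact congrFun hres ⟨x, by simpa using hx⟩

/-- For every `n ≥ 1` and every `0 ≤ r ≤ n`, the number of permutations `σ ∈ S_n` with
`d∘(σ,e) ≤ r` is at most `C(n,r) · n!/(n−r)!`. -/
theorem card_translocBall_le (n : ℕ) (hn : 1 ≤ n) (r : ℕ) (hr : r ≤ n) :
    {σ : Equiv.Perm (Fin n) | translocDist σ 1 ≤ r}.ncard ≤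
      n.choose r * (n.factorial / (n - r).factorial) := by
  rw [← Nat.descFactorial_eq_div hr]
  have hsub : {σ : Equiv.Perm (Fin n) | translocDist σ 1 ≤ r} ⊆
      ⋃ A ∈ Finset.powersetCard r (Finset.univ : Finset (Fin n)),
        {σ : Equiv.Perm (Fin n) | StrictMonoOn σ ((A : Set (Fin n))ᶜ)} := by
    intro σ hσ
    obtain ⟨A, hA, hm⟩ := exists_set_of_dist hr σ hσ
    simp only [Set.mem_iUnion]
    exact ⟨A, by simp [Finset.mem_powersetCard, hA], hm⟩
  refine (Set.ncard_le_ncard hsub (Set.toFinite _)).trans ?_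
  refine (Finset.set_ncard_biUnion_le _ _).trans ?_
  refine (Finset.sum_le_card_nsmul _ _ (n.descFactorial r) ?_).trans ?_
  · intro A hA
    have := card_strictMonoOn_le A
    rwa [(Finset.mem_powersetCard.1 hA).2] at this
  · simp
end

section
/- For all integers n and d with n ≥ d ≥ 1, the maximum size A_T(n,d) of a subset of S_n whose distinct elements are at pairwise transposition (Cayley) distance at least d satisfies n! / |{π ∈ S_n : c(π) ≥ n−d+1}| ≤ A_T(n,d) ≤ n!/d!, where c(π) denotes the number of cycles of π (so that |{π ∈ S_n : c(π) ≥ n−d+1}| = Σ_{i=n−d+1}^{n} (−1)^{n−i} s(n,i) with s(n,i) the Stirling numbers of the first kind). -/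
/-- The transposition (Cayley) distance: the minimum number of transpositions
transforming `σ` into `π`. -/
noncomputable def cayleyDist {n : ℕ} (σ π : Equiv.Perm (Fin n)) : ℕ :=
  sInf {m | ∃ L : List (Equiv.Perm (Fin n)), L.length = m ∧
    (∀ τ ∈ L, ∃ a b : Fin n, a ≠ b ∧ τ = Equiv.swap a b) ∧ π = σ * L.prod}

/-- The number of cycles of a permutation, counting fixed points as cycles. -/
def numCycles {n : ℕ} (π : Equiv.Perm (Fin n)) : ℕ :=
  Multiset.card π.cycleType + (Finset.univ.filter fun x => π x = x).card

/-- `maxCayleyCode n d` is the maximum size of a subset of the symmetric group on `n`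
elements whose distinct elements are at pairwise Cayley distance at least `d`. -/
noncomputable def maxCayleyCode (n d : ℕ) : ℕ :=
  sSup {M | ∃ C : Finset (Equiv.Perm (Fin n)), C.card = M ∧
    ∀ σ ∈ C, ∀ π ∈ C, σ ≠ π → d ≤ cayleyDist σ π}

/-- A product of `m` transpositions has at least `n - m` cycles. -/
theorem le_length_add_numCycles {n : ℕ} (L : List (Equiv.Perm (Fin n)))
    (hL : ∀ τ ∈ L, ∃ a b : Fin n, a ≠ b ∧ τ = Equiv.swap a b) :
    n ≤ L.length + numCycles L.prod := by
  classical
  set π := L.prod with hπ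
  have hsw : ∀ i : Fin L.length, ∃ p : Fin n × Fin n, L.get i = Equiv.swap p.1 p.2 := by
    intro i
    obtain ⟨a, b, _, h⟩ := hL (L.get i) (L.get_mem i)
    exact ⟨(a, b), h⟩
  choose p hp using hsw
  have hrep : ∀ c : π.cycleFactorsFinset, ∃ x, x ∈ (c : Equiv.Perm (Fin n)).support := by
    intro c
    have hc := (Equiv.Perm.mem_cycleFactorsFinset_iff.mp c.2).1
    exact hc.nonempty_support
  choose r hr using hrep
  let φ : (Fin n → ℚ) →ₗ[ℚ]
      ((Fin L.length ⊕ (π.cycleFactorsFinset ⊕ {x // π x = x})) → ℚ) :=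
    { toFun := fun f => Sum.elim (fun i => f (p i).1 - f (p i).2)
        (Sum.elim (fun c => f (r c)) (fun x => f x.1))
      map_add' := by
        intro f g
        ext x
        rcases x with i | c | x <;> simp <;> ring
      map_smul' := by
        intro t f
        ext x
        rcases x with i | c | x <;> simp <;> ring }
  have hinj : Function.Injective φ := by
    rw [← LinearMap.ker_eq_bot, LinearMap.ker_eq_bot']
    intro f hf
    have h1 : ∀ i, f (p i).1 = f (p i).2 := fun i => by
      have := congrFun hf (Sum.inl i)
      exact sub_eq_zero.mp this
    have h2 : ∀ c, f (r c) = 0 := fun c => congrFun hf (Sum.inr (Sum.inl c))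
    have h3 : ∀ x : {x // π x = x}, f x.1 = 0 := fun x => congrFun hf (Sum.inr (Sum.inr x))
    have h4 : ∀ τ ∈ L, ∀ x, f (τ x) = f x := by
      intro τ hτ x
      obtain ⟨i, rfl⟩ := List.get_of_mem hτ
      rw [hp i, Equiv.swap_apply_def]
      split_ifs with ha hb
      · rw [ha, h1]
      · rw [hb, h1]
      · rfl
    have h5 : ∀ M : List (Equiv.Perm (Fin n)), (∀ τ ∈ M, ∀ x, f (τ x) = f x) →
        ∀ x, f (M.prod x) = f x := by
      intro M
      induction M with
      | nil => intro _ x; simp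
      | cons τ M ih =>
        intro hM x
        rw [List.prod_cons, Equiv.Perm.mul_apply, hM τ (by simp), ih]
        intro τ' h'
        exact hM τ' (by simp [h'])
    have h6 : ∀ x, f (π x) = f x := h5 L h4
    have h7 : ∀ (k : ℕ) x, f ((π ^ k) x) = f x := by
      intro k
      induction k with
      | zero => intro x; simp
      | succ k ih => intro x; rw [pow_succ, Equiv.Perm.mul_apply, ih, h6]
    ext x
    by_cases hx : π x = x
    · exact h3 ⟨x, hx⟩
    · have hx' : x ∈ π.support := Equiv.Perm.mem_support.mpr hx
      have hc := Equiv.Perm.cycleOf_mem_cycleFactorsFinset_iff.mpr hx'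
      have hy := hr ⟨_, hc⟩
      have hsc : π.SameCycle x (r ⟨_, hc⟩) :=
        (Equiv.Perm.mem_support_cycleOf_iff.mp hy).1
      obtain ⟨k, _, hk⟩ := hsc.exists_pow_eq'
      have := h2 ⟨_, hc⟩
      rw [← hk, h7] at this
      exact this
  have := LinearMap.finrank_le_finrank_of_injective hinj
  simp only [Module.finrank_fintype_fun_eq_card, Fintype.card_sum, Fintype.card_fin,
    Fintype.card_subtype, Finset.filter_univ_mem] at this
  unfold numCycles
  rw [Equiv.Perm.cycleType_def, Multiset.card_map]
  exact this

theorem numCycles_inv {n : ℕ} (π : Equiv.Perm (Fin n)) : numCycles π⁻¹ = numCycles π := by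
  unfold numCycles
  rw [Equiv.Perm.cycleType_inv]
  congr 2
  ext x
  simp only [Finset.mem_filter, Finset.mem_univ, true_and, Equiv.Perm.inv_eq_iff_eq]
  exact eq_comm

theorem numCycles_of_cayleyDist_lt {n d : ℕ} (hdn : d ≤ n) (σ π : Equiv.Perm (Fin n))
    (h : cayleyDist σ π < d) : n - d + 1 ≤ numCycles (σ⁻¹ * π) := by
  have hne : {m | ∃ L : List (Equiv.Perm (Fin n)), L.length = m ∧
      (∀ τ ∈ L, ∃ a b : Fin n, a ≠ b ∧ τ = Equiv.swap a b) ∧ π = σ * L.prod}.Nonempty := by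
    obtain ⟨L, h1, h2⟩ := Equiv.Perm.swapFactors (σ⁻¹ * π)
    refine ⟨_, L, rfl, h2, ?_⟩
    rw [h1]; group
  obtain ⟨L, h1, h2, h3⟩ := Nat.sInf_mem hne
  have := le_length_add_numCycles L h2
  have h4 : σ⁻¹ * π = L.prod := by rw [h3]; group
  rw [h4]
  change L.length = cayleyDist σ π at h1
  omega

theorem exists_swaps {n : ℕ} (k : ℕ) : ∀ σ : Equiv.Perm (Fin n),
    (∀ x : Fin n, k + 1 ≤ x.val → σ x = x) →
    ∃ L : List (Equiv.Perm (Fin n)), L.length ≤ k ∧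
      (∀ τ ∈ L, ∃ a b : Fin n, a ≠ b ∧ τ = Equiv.swap a b) ∧ σ = L.prod := by
  induction k with
  | zero =>
    intro σ h
    refine ⟨[], by simp, by simp, ?_⟩
    ext x
    by_cases hx : 1 ≤ x.val
    · simp [h x hx]
    · by_cases hs : 1 ≤ (σ x).val
      · have := σ.injective (h _ hs)
        simp [this]
      · simp; omega
  | succ k ih =>
    intro σ h
    by_cases hk : k + 1 < n
    · by_cases ha : σ ⟨k + 1, hk⟩ = ⟨k + 1, hk⟩
      · obtain ⟨L, h1, h2⟩ := ih σ (by
          intro x hx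
          by_cases hx' : x = ⟨k + 1, hk⟩
          · rw [hx', ha]
          · refine h x ?_
            have : x.val ≠ k + 1 := fun h => hx' (Fin.ext h)
            omega)
        exact ⟨L, by omega, h2⟩
      · obtain ⟨L, h1, h2, h3⟩ := ih
          (Equiv.swap ⟨k + 1, hk⟩ (σ ⟨k + 1, hk⟩) * σ) (by
          intro x hx
          by_cases hx' : x = ⟨k + 1, hk⟩
          · rw [hx', Equiv.Perm.mul_apply, Equiv.swap_apply_right]
          · have hx2 : x.val ≠ k + 1 := fun h => hx' (Fin.ext h)
            have hx3 := h x (by omega)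
            rw [Equiv.Perm.mul_apply, hx3]
            refine Equiv.swap_apply_of_ne_of_ne hx' ?_
            intro h4
            rw [← hx3] at h4
            exact hx' (σ.injective h4))
        refine ⟨Equiv.swap ⟨k + 1, hk⟩ (σ ⟨k + 1, hk⟩) :: L, by simp [h1], ?_, ?_⟩
        · intro τ hτ
          rcases List.mem_cons.mp hτ with rfl | hτ
          · exact ⟨_, _, fun h => ha h.symm, rfl⟩
          · exact h2 τ hτ
        · rw [List.prod_cons, ← h3, ← mul_assoc, Equiv.swap_mul_self, one_mul]
    · obtain ⟨L, h1, h2⟩ := ih σ (fun x hx => absurd x.2 (by omega))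
      exact ⟨L, by omega, h2⟩

/-- For all `n ≥ d ≥ 1`,
`n! / |{π : c(π) ≥ n−d+1}| ≤ A_T(n,d) ≤ n!/d!`. -/
theorem maxCayleyCode_bounds (n d : ℕ) (hd : 1 ≤ d) (hdn : d ≤ n) :
    (n.factorial : ℝ) / ({π : Equiv.Perm (Fin n) | n - d + 1 ≤ numCycles π}.ncard : ℝ)
      ≤ (maxCayleyCode n d : ℝ) ∧
    (maxCayleyCode n d : ℝ) ≤ (n.factorial : ℝ) / (d.factorial : ℝ) := by
  classical
  have hbdd : BddAbove {M | ∃ C : Finset (Equiv.Perm (Fin n)), C.card = M ∧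
      ∀ σ ∈ C, ∀ π ∈ C, σ ≠ π → d ≤ cayleyDist σ π} := by
    refine ⟨Fintype.card (Equiv.Perm (Fin n)), ?_⟩
    rintro M ⟨C, rfl, _⟩
    exact Finset.card_le_univ C
  have hnonempty : {M | ∃ C : Finset (Equiv.Perm (Fin n)), C.card = M ∧
      ∀ σ ∈ C, ∀ π ∈ C, σ ≠ π → d ≤ cayleyDist σ π}.Nonempty := ⟨0, ∅, by simp, by simp⟩
  obtain ⟨C, hC, hcode⟩ := Nat.sSup_mem hnonempty hbdd
  change C.card = maxCayleyCode n d at hC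
  rw [← hC]
  have hcardn : Fintype.card (Equiv.Perm (Fin n)) = n.factorial := by
    rw [Fintype.card_perm, Fintype.card_fin]
  constructor
  · have hset : {π : Equiv.Perm (Fin n) | n - d + 1 ≤ numCycles π}.ncard =
        (Finset.univ.filter fun π : Equiv.Perm (Fin n) => n - d + 1 ≤ numCycles π).card := by
      rw [← Set.ncard_coe_finset]
      congr 1
      ext; simp
    rw [hset]
    set B := Finset.univ.filter fun π : Equiv.Perm (Fin n) => n - d + 1 ≤ numCycles π with hB
    have hone : (1 : Equiv.Perm (Fin n)) ∈ B := by
      have := le_length_add_numCycles ([] : List (Equiv.Perm (Fin n))) (by simp)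
      simp only [List.length_nil, List.prod_nil, zero_add] at this
      simp only [hB, Finset.mem_filter, Finset.mem_univ, true_and]
      omega
    have hcover : ∀ π : Equiv.Perm (Fin n), ∃ σ ∈ C, σ⁻¹ * π ∈ B := by
      intro π
      by_contra! hcon
      have hnot : π ∉ C := fun h => hcon π h (by simpa using hone)
      have hfar : ∀ σ ∈ C, d ≤ cayleyDist σ π ∧ d ≤ cayleyDist π σ := by
        intro σ hσ
        constructor
        · by_contra! hlt
          exact hcon σ hσ (by simpa [hB] using numCycles_of_cayleyDist_lt hdn _ _ hlt)
        · by_contra! hlt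
          have h1 := numCycles_of_cayleyDist_lt hdn _ _ hlt
          rw [← numCycles_inv, mul_inv_rev, inv_inv] at h1
          exact hcon σ hσ (by simpa [hB] using h1)
      have hle : (insert π C).card ≤ maxCayleyCode n d := by
        refine le_csSup hbdd ⟨_, rfl, ?_⟩
        intro σ hσ ρ hρ hne
        rcases Finset.mem_insert.mp hσ with e1 | h1 <;>
          rcases Finset.mem_insert.mp hρ with e2 | h2
        · exact absurd (e1.trans e2.symm) hne
        · rw [e1]; exact (hfar _ h2).2
        · rw [e2]; exact (hfar _ h1).1
        · exact hcode _ h1 _ h2 hne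
      rw [Finset.card_insert_of_notMem hnot] at hle
      omega
    have hmul : n.factorial ≤ C.card * B.card := by
      rw [← hcardn, ← Finset.card_univ, ← Finset.card_product]
      refine Finset.card_le_card_of_surjOn (fun q => q.1 * q.2) ?_
      intro π _
      obtain ⟨σ, hσ, h⟩ := hcover π
      exact ⟨(σ, σ⁻¹ * π), by simpa using ⟨hσ, by simpa using h⟩, by simp⟩
    refine div_le_of_le_mul₀ (by positivity) (by positivity) ?_
    exact_mod_cast hmul
  · rw [le_div_iff₀ (by positivity)]
    let ι := Equiv.Perm.viaEmbeddingHom (Fin.castLEEmb hdn)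
    have hι : Function.Injective ι := Equiv.Perm.viaEmbeddingHom_injective _
    have hclose : ∀ σ ∈ C, ∀ π ∈ C, ∀ h, π = σ * ι h → σ = π := by
      intro σ hσ π hπ h heq
      by_contra hne
      have h1 := hcode σ hσ π hπ hne
      obtain ⟨L, h2, h3, h4⟩ := exists_swaps (d - 1) (ι h) (by
        intro x hx
        refine Equiv.Perm.viaEmbedding_apply_of_notMem _ _ _ ?_
        rintro ⟨y, rfl⟩
        have := y.2
        simp at hx
        omega)
      have h5 : cayleyDist σ π ≤ L.length := Nat.sInf_le ⟨L, rfl, h3, by rw [heq, h4]⟩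
      omega
    have hmul : C.card * d.factorial ≤ n.factorial := by
      have : Fintype.card (C × Equiv.Perm (Fin d)) ≤ Fintype.card (Equiv.Perm (Fin n)) := by
        refine Fintype.card_le_of_injective (fun q => (q.1 : Equiv.Perm (Fin n)) * ι q.2) ?_
        rintro ⟨⟨σ, hσ⟩, h⟩ ⟨⟨π, hπ⟩, g⟩ heq
        simp only at heq
        have h1 : σ = π := hclose σ hσ π hπ (h * g⁻¹) (by
          rw [map_mul, map_inv, ← mul_assoc, heq, mul_inv_cancel_right])
        subst h1
        have h2 := hι (mul_left_cancel heq)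
        rw [h2]
      rwa [Fintype.card_prod, hcardn, Fintype.card_coe, Fintype.card_perm,
        Fintype.card_fin] at this
    exact_mod_cast hmul
end
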